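/- arXiv:2510.02792 — 2 statements merged into one kernel-verified Lean document; each statement's English description precedes it below -/
import Mathlib

section
/- Let u : ℝ² → ℝ be a harmonic function on ℝ² such that there exists a constant C with u(x) ≤ C + C·log(1 + |x|) for all x ∈ ℝ². Then u is constant. -/
/-- The Laplacian of a function `u : ℝ² ≅ ℂ → ℝ`. -/
noncomputable def lap (u : ℂ → ℝ) (x : ℂ) : ℝ :=
  fderiv ℝ (fun y => fderiv ℝ u y 1) x 1 +
    fderiv ℝ (fun y => fderiv ℝ u y Complex.I) x Complex.I

open Filter Topology InnerProductSpace in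
theorem harmonicOnNhd_univ_of_lap_eq_zero {u : ℂ → ℝ} (hu : ContDiff ℝ 2 u)
    (hharm : ∀ x, lap u x = 0) : HarmonicOnNhd u Set.univ := by
  refine fun x _ => ⟨hu.contDiffAt, Eventually.of_forall fun y => ?_⟩
  have hd : DifferentiableAt ℝ (fderiv ℝ u) y :=
    (hu.fderiv_right (m := 1) (by norm_num)).differentiable (by norm_num) y
  have hy := hharm y
  unfold lap at hy
  rw [fderiv_clm_apply hd (by fun_prop), fderiv_clm_apply hd (by fun_prop)] at hy
  simpa [laplacian_eq_iteratedFDeriv_complexPlane, iteratedFDeriv_two_apply] using hy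

open Filter Topology in
/-- An entire function vanishing at `0` whose real part grows at most logarithmically is zero. -/
theorem entire_eq_zero_of_re_le_log {f : ℂ → ℂ} (hf : Differentiable ℂ f) (h0 : f 0 = 0)
    {A B : ℝ} (hA : 0 < A) (hB : 0 ≤ B)
    (hre : ∀ z, (f z).re ≤ A + B * Real.log (1 + ‖z‖)) (z : ℂ) : f z = 0 := by
  have hlim : Tendsto (fun T : ℝ => 2 * (A + B * Real.log T) * ‖z‖ / (T - 1 - ‖z‖))
      atTop (𝓝 0) := by
    have hc := Real.tendsto_pow_log_div_mul_add_atTop 1 (-1 - ‖z‖) 0 one_ne_zero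
    have hl := Real.tendsto_pow_log_div_mul_add_atTop 1 (-1 - ‖z‖) 1 one_ne_zero
    have h := (hc.const_mul (2 * A * ‖z‖)).add (hl.const_mul (2 * B * ‖z‖))
    simp only [mul_zero, add_zero] at h
    refine h.congr fun T => ?_
    rw [show 1 * T + (-1 - ‖z‖) = T - 1 - ‖z‖ by ring]
    ring
  have hle : ∀ᶠ T : ℝ in atTop,
      ‖f z‖ ≤ 2 * (A + B * Real.log T) * ‖z‖ / (T - 1 - ‖z‖) := by
    filter_upwards [eventually_gt_atTop (1 + ‖z‖)] with T hT
    have hz := norm_nonneg z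
    have hlog : 0 ≤ Real.log T := Real.log_nonneg (by linarith)
    refine Complex.borelCaratheodory_zero (by positivity) hf.differentiableOn ?_
      (by linarith) (by rw [mem_ball_zero_iff]; linarith) h0
    intro w hw
    rw [mem_ball_zero_iff] at hw
    have hwT : Real.log (1 + ‖w‖) ≤ Real.log T :=
      Real.log_le_log (by positivity) (by linarith)
    exact (hre w).trans (by gcongr)
  exact norm_le_zero_iff.1 (ge_of_tendsto hlim hle)

/-- A harmonic function on `ℝ²` bounded above by `C + C log(1+|x|)` is constant. -/
theorem stmt_3 (u : ℂ → ℝ) (hu : ContDiff ℝ 2 u) (hharm : ∀ x, lap u x = 0)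
    (C : ℝ) (hgrowth : ∀ x, u x ≤ C + C * Real.log (1 + ‖x‖)) :
    ∃ c : ℝ, ∀ x, u x = c := by
  obtain ⟨F, hF, hFu⟩ :=
    (harmonicOnNhd_univ_of_lap_eq_zero hu hharm).exists_analyticOnNhd_univ_re_eq
  have hre : ∀ z, (F z).re = u z := congrFun hFu
  refine ⟨u 0, fun x => ?_⟩
  have hFd : Differentiable ℂ fun z => F z - F 0 :=
    Differentiable.sub_const (fun z => (hF z (Set.mem_univ z)).differentiableAt) _
  have h := entire_eq_zero_of_re_le_log (A := |C| + |u 0| + 1) (B := |C|) hFd (sub_self _)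
    (by positivity) (abs_nonneg C) (fun z => ?_) x
  · rw [← hre, ← hre, sub_eq_zero.1 h]
  · have hlog : 0 ≤ Real.log (1 + ‖z‖) := Real.log_nonneg (by simp)
    have hC := mul_le_mul_of_nonneg_right (le_abs_self C) hlog
    rw [Complex.sub_re, hre, hre]
    linarith [hgrowth z, le_abs_self C, neg_abs_le (u 0)]
end

section
/- Let u be harmonic on the punctured disk B₁(0)\{0} ⊂ ℝ² and suppose there exist constants C₁, C₂ > 0 with u(x) ≤ −C₁·log|x| + C₂ for all x ∈ B₁(0)\{0}. Then there exists a constant γ ∈ ℝ and a harmonic function w on B₁(0) such that u(x) = −(γ/2π)·log|x| + w(x) on B₁(0)\{0}. -/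
open Metric

open Complex Filter Topology InnerProductSpace

/-- Twice the Wirtinger derivative `∂p/∂z` of a real-valued function `p` on the complex plane. -/
noncomputable def complexPartial (p : ℂ → ℝ) (z : ℂ) : ℂ :=
  fderiv ℝ p z 1 - I * fderiv ℝ p z I

lemma fderiv_apply_eq_re_complexPartial_mul (p : ℂ → ℝ) (z h : ℂ) :
    fderiv ℝ p z h = (complexPartial p z * h).re := by
  conv_lhs => rw [(by simp : h = h.re • (1 : ℂ) + h.im • (I : ℂ))]
  rw [map_add, map_smul, map_smul]
  simp [complexPartial]
  ring

lemma complexPartial_eq_of_fderiv_apply {p : ℂ → ℝ} {z a : ℂ}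
    (h : ∀ k, fderiv ℝ p z k = (a * k).re) : complexPartial p z = a := by
  apply Complex.ext <;> simp [complexPartial, h]

lemma HasDerivAt.hasFDerivAt_re {f : ℂ → ℂ} {a z : ℂ} (hf : HasDerivAt f a z) :
    HasFDerivAt (fun y => (f y).re)
      (reCLM.comp ((ContinuousLinearMap.toSpanSingleton ℂ a).restrictScalars ℝ)) z :=
  reCLM.hasFDerivAt.comp z (hf.hasFDerivAt.restrictScalars ℝ)

lemma HasDerivAt.complexPartial_re {f : ℂ → ℂ} {a z : ℂ} (hf : HasDerivAt f a z) :
    complexPartial (fun y => (f y).re) z = a :=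
  complexPartial_eq_of_fderiv_apply fun k => by
    rw [hf.hasFDerivAt_re.fderiv]; simp [mul_comm]

lemma complexPartial_comp {p : ℂ → ℝ} {g : ℂ → ℂ} {z : ℂ} (hp : DifferentiableAt ℝ p (g z))
    (hg : DifferentiableAt ℂ g z) :
    complexPartial (fun y => p (g y)) z = complexPartial p (g z) * deriv g z :=
  complexPartial_eq_of_fderiv_apply fun k => by
    have := (hp.hasFDerivAt.comp z (hg.hasDerivAt.hasFDerivAt.restrictScalars ℝ)).fderiv
    simp only [Function.comp_def] at this
    rw [this]
    simp [fderiv_apply_eq_re_complexPartial_mul, mul_comm, mul_left_comm]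

lemma InnerProductSpace.HarmonicAt.exists_analyticAt_re {p : ℂ → ℝ} {z : ℂ} (hp : HarmonicAt p z) :
    ∃ f : ℂ → ℂ, AnalyticAt ℂ f z ∧ (fun y => (f y).re) =ᶠ[𝓝 z] p := by
  obtain ⟨r, hr, hb⟩ := Metric.eventually_nhds_iff_ball.1 hp.eventually
  obtain ⟨f, hf, he⟩ := HarmonicOnNhd.exists_analyticOnNhd_ball_re_eq (f := p) (z := z) hb
  exact ⟨f, hf z (mem_ball_self hr), he.eventuallyEq_of_mem (ball_mem_nhds z hr)⟩

lemma InnerProductSpace.HarmonicAt.comp_analyticAt {p : ℂ → ℝ} {g : ℂ → ℂ} {z : ℂ}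
    (hp : HarmonicAt p (g z)) (hg : AnalyticAt ℂ g z) : HarmonicAt (fun y => p (g y)) z := by
  obtain ⟨f, hf, he⟩ := hp.exists_analyticAt_re
  have := (AnalyticAt.comp hf hg).harmonicAt_re
  refine (harmonicAt_congr_nhds ?_).1 this
  exact hg.continuousAt.eventually he

/-- Gradient estimate for positive harmonic functions. -/
lemma norm_complexPartial_le {v : ℂ → ℝ} {c : ℂ} {R : ℝ} (hR : 0 < R)
    (hv : HarmonicOnNhd v (ball c R)) (hpos : ∀ z ∈ ball c R, 0 < v z) :
    ‖complexPartial v c‖ ≤ 2 * v c / R := by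
  obtain ⟨f, hf, he⟩ := hv.exists_analyticOnNhd_ball_re_eq
  have hc : c ∈ ball c R := mem_ball_self hR
  have hre : ∀ z ∈ ball c R, 0 < (f z).re := fun z hz => by
    have := he hz
    simp only at this
    rw [this]; exact hpos z hz
  set b := f c with hb
  have hbv : b.re = v c := he hc
  have hbre : 0 < b.re := hre c hc
  have hne : ∀ z ∈ ball c R, f z + (starRingEnd ℂ) b ≠ 0 := fun z hz h0 => by
    have := congrArg Complex.re h0
    simp at this
    linarith [hre z hz]
  set g : ℂ → ℂ := fun z => (f z - b) / (f z + (starRingEnd ℂ) b) with hg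
  have hfd : ∀ z ∈ ball c R, HasDerivAt f (deriv f z) z :=
    fun z hz => (hf z hz).differentiableAt.hasDerivAt
  have hgd : DifferentiableOn ℂ g (ball c R) := fun z hz =>
    (((hf z hz).differentiableAt.sub_const _).div ((hf z hz).differentiableAt.add_const _)
      (hne z hz)).differentiableWithinAt
  have hmaps : Set.MapsTo g (ball c R) (closedBall (g c) 1) := fun z hz => by
    have hgc : g c = 0 := by simp [hg, hb]
    rw [hgc, mem_closedBall_zero_iff, hg, norm_div,
      div_le_one (norm_pos_iff.2 (hne z hz))]
    rw [← sq_le_sq₀ (norm_nonneg _) (norm_nonneg _), ← normSq_eq_norm_sq, ← normSq_eq_norm_sq,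
      normSq_apply, normSq_apply]
    simp
    nlinarith [hre z hz]
  have hS := norm_deriv_le_div_of_mapsTo_ball hgd hmaps hR
  have hsum : b + (starRingEnd ℂ) b = ((2 * v c : ℝ) : ℂ) := by
    rw [add_conj, hbv]
  have hderiv : deriv g c = deriv f c / ((2 * v c : ℝ) : ℂ) := by
    have : HasDerivAt g _ c :=
      ((hfd c hc).sub_const b).div ((hfd c hc).add_const ((starRingEnd ℂ) b)) (hne c hc)
    rw [this.deriv, ← hb, hsum, sub_self]
    have : ((2 * v c : ℝ) : ℂ) ≠ 0 := by
      rw [← hsum]; exact hne c hc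
    field_simp
    simp
  have hcp : complexPartial v c = deriv f c := by
    rw [← (hfd c hc).complexPartial_re]
    have := (he.eventuallyEq_of_mem (ball_mem_nhds c hR)).fderiv_eq (𝕜 := ℝ)
    simp [complexPartial, this]
  have hv0 : 0 < v c := hpos c hc
  rw [hderiv, norm_div, norm_real, Real.norm_of_nonneg (by positivity),
    div_le_iff₀ (by positivity)] at hS
  rw [hcp]
  calc _ ≤ _ := hS
    _ = _ := by ring

lemma exp_mem_puncturedBall {ζ : ℂ} (h : ζ.re < 0) : exp ζ ∈ ball (0 : ℂ) 1 \ {0} :=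
  ⟨by simpa [norm_exp] using h, exp_ne_zero ζ⟩

section PuncturedDisk

variable {p : ℂ → ℝ}

lemma norm_complexPartial_exp_mul_exp_le
    (hp : HarmonicOnNhd p (ball (0 : ℂ) 1 \ {0})) (hpos : ∀ z ∈ ball (0 : ℂ) 1 \ {0}, 0 < p z)
    {ζ : ℂ} (h : ζ.re < 0) :
    ‖complexPartial p (exp ζ) * exp ζ‖ ≤ 2 * p (exp ζ) / -ζ.re := by
  have hmem : ∀ ξ ∈ ball ζ (-ζ.re), exp ξ ∈ ball (0 : ℂ) 1 \ {0} := fun ξ hξ => by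
    apply exp_mem_puncturedBall
    have h1 := (abs_le.1 (abs_re_le_norm (ξ - ζ))).2
    have h2 := mem_ball_iff_norm.1 hξ
    simp at h1
    linarith
  have key := norm_complexPartial_le (v := fun ξ => p (exp ξ)) (c := ζ) (neg_pos.2 h)
    (fun ξ hξ => HarmonicAt.comp_analyticAt (hp _ (hmem ξ hξ)) analyticAt_cexp)
    (fun ξ hξ => hpos _ (hmem ξ hξ))
  rwa [complexPartial_comp ((hp _ (exp_mem_puncturedBall h)).1.differentiableAt two_ne_zero)
    differentiable_exp.differentiableAt, (hasDerivAt_exp ζ).deriv] at key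

/-- A positive harmonic function on the punctured disk grows at most like `(log ‖z‖) ^ 2`. -/
lemma exists_le_mul_log_sq
    (hp : HarmonicOnNhd p (ball (0 : ℂ) 1 \ {0})) (hpos : ∀ z ∈ ball (0 : ℂ) 1 \ {0}, 0 < p z) :
    ∃ M : ℝ, ∀ z : ℂ, z ≠ 0 → Real.log ‖z‖ ≤ -1 → p z ≤ M * Real.log ‖z‖ ^ 2 := by
  have hsub : sphere (0 : ℂ) (Real.exp (-1)) ⊆ ball (0 : ℂ) 1 \ {0} := fun z hz => by
    rw [mem_sphere_zero_iff_norm] at hz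
    refine ⟨by simp [hz], fun h0 => ?_⟩
    rw [Set.mem_singleton_iff.1 h0, norm_zero] at hz
    exact (Real.exp_pos _).ne hz
  obtain ⟨M, hM⟩ := (isCompact_sphere (0 : ℂ) (Real.exp (-1))).bddAbove_image
    (hp.continuousOn.mono hsub)
  refine ⟨M, fun z hz hlog => ?_⟩
  set γ : ℝ → ℂ := fun s => -(s : ℂ) + (log z).im * I with hγ
  have hγre : ∀ s, (γ s).re = -s := fun s => by simp [hγ]
  have hmem : ∀ s, 0 < s → exp (γ s) ∈ ball (0 : ℂ) 1 \ {0} := fun s hs =>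
    exp_mem_puncturedBall (by rw [hγre]; linarith)
  have hγd : ∀ s, HasDerivAt (fun s => exp (γ s)) (-exp (γ s)) s := fun s => by
    have : HasDerivAt γ (-1) s := ((hasDerivAt_id s).ofReal_comp.neg).add_const _
    simpa using this.cexp
  have hd : ∀ s, 0 < s → HasDerivAt (fun s => p (exp (γ s)))
      (complexPartial p (exp (γ s)) * -exp (γ s)).re s := fun s hs => by
    rw [← fderiv_apply_eq_re_complexPartial_mul]
    exact ((hp _ (hmem s hs)).1.differentiableAt two_ne_zero).hasFDerivAt.comp_hasDerivAt s (hγd s)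
  have hd2 : ∀ s, 0 < s → HasDerivAt (fun s => p (exp (γ s)) / s ^ 2)
      (((complexPartial p (exp (γ s)) * -exp (γ s)).re * s ^ 2 - p (exp (γ s)) * (2 * s))
        / (s ^ 2) ^ 2) s := fun s hs => by
    have := (hd s hs).fun_div (hasDerivAt_pow 2 s) (by positivity)
    simpa using this
  have hanti : AntitoneOn (fun s => p (exp (γ s)) / s ^ 2) (Set.Ici 1) := by
    apply antitoneOn_of_deriv_nonpos (convex_Ici 1)
    · exact fun s hs => (hd2 s (lt_of_lt_of_le one_pos hs)).continuousAt.continuousWithinAt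
    · intro s hs
      rw [interior_Ici] at hs
      exact (hd2 s (one_pos.trans hs)).differentiableAt.differentiableWithinAt
    · intro s hs
      rw [interior_Ici] at hs
      have hs0 : 0 < s := one_pos.trans hs
      rw [(hd2 s hs0).deriv]
      apply div_nonpos_of_nonpos_of_nonneg _ (by positivity)
      have h1 := norm_complexPartial_exp_mul_exp_le hp hpos (ζ := γ s) (by rw [hγre]; linarith)
      have h2 := re_le_norm (complexPartial p (exp (γ s)) * -exp (γ s))
      rw [mul_neg, norm_neg] at h2
      rw [hγre, neg_neg] at h1
      have h3 := h2.trans h1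
      rw [le_div_iff₀ hs0] at h3
      rw [mul_neg]
      nlinarith
  have hz' : exp (γ (-Real.log ‖z‖)) = z := by
    have : γ (-Real.log ‖z‖) = log z := by
      apply Complex.ext <;> simp [hγ, log_re]
    rw [this, exp_log hz]
  have h := hanti (Set.mem_Ici.2 le_rfl) (Set.mem_Ici.2 (le_neg.2 hlog)) (le_neg.2 hlog)
  simp only [hz', neg_sq, one_pow, div_one] at h
  have hM1 : p (exp (γ 1)) ≤ M := hM ⟨exp (γ 1), by simp [norm_exp, hγre], rfl⟩
  rw [div_le_iff₀ (by nlinarith)] at h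
  nlinarith [sq_nonneg (Real.log ‖z‖)]

lemma norm_mul_complexPartial_le
    (hp : HarmonicOnNhd p (ball (0 : ℂ) 1 \ {0})) (hpos : ∀ z ∈ ball (0 : ℂ) 1 \ {0}, 0 < p z) :
    ∃ M : ℝ, ∀ z : ℂ, z ≠ 0 → Real.log ‖z‖ ≤ -1 →
      ‖z * complexPartial p z‖ ≤ M * -Real.log ‖z‖ := by
  obtain ⟨M, hM⟩ := exists_le_mul_log_sq hp hpos
  refine ⟨2 * M, fun z hz hlog => ?_⟩
  have h := norm_complexPartial_exp_mul_exp_le hp hpos (ζ := log z) (by rw [log_re]; linarith)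
  rw [exp_log hz, log_re, mul_comm, le_div_iff₀ (by linarith)] at h
  have h2 := hM z hz hlog
  have hl : 0 < -Real.log ‖z‖ := by linarith
  refine le_of_mul_le_mul_right ?_ hl
  nlinarith

/-- The function `z * ∂p/∂z` has a removable singularity at the origin. -/
lemma exists_differentiableOn_eq_mul_complexPartial
    (hp : HarmonicOnNhd p (ball (0 : ℂ) 1 \ {0})) (hpos : ∀ z ∈ ball (0 : ℂ) 1 \ {0}, 0 < p z) :
    ∃ G : ℂ → ℂ, DifferentiableOn ℂ G (ball (0 : ℂ) 1) ∧
      ∀ z ∈ ball (0 : ℂ) 1 \ {0}, G z = z * complexPartial p z := by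
  obtain ⟨M, hM⟩ := norm_mul_complexPartial_le hp hpos
  have ho : (fun z => z * complexPartial p z - 0 * complexPartial p 0)
      =o[𝓝[≠] 0] fun z : ℂ => (z - 0)⁻¹ := by
    rw [Asymptotics.isLittleO_iff]
    intro ε hε
    have hnorm : Tendsto (fun z : ℂ => ‖z‖) (𝓝[≠] 0) (𝓝[>] 0) := tendsto_norm_nhdsNE_zero
    have h1 : Tendsto (fun z : ℂ => M * -(‖z‖ * Real.log ‖z‖)) (𝓝[≠] 0) (𝓝 0) := by
      have : Tendsto (fun x : ℝ => M * -(x * Real.log x)) (𝓝 0) (𝓝 0) := by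
        have := (Real.continuous_mul_log.neg.const_mul M).tendsto 0
        simpa using this
      exact this.comp (hnorm.mono_right nhdsWithin_le_nhds)
    filter_upwards [h1.eventually (gt_mem_nhds hε), self_mem_nhdsWithin,
      (Real.tendsto_log_nhdsGT_zero.comp hnorm).eventually (eventually_le_atBot (-1))]
      with z hz hz0 hlog
    have hz0' : 0 < ‖z‖ := norm_pos_iff.2 hz0
    rw [zero_mul, sub_zero, sub_zero, norm_inv, ← div_eq_mul_inv, le_div_iff₀ hz0']
    nlinarith [hM z hz0 hlog]
  have hd : DifferentiableOn ℂ (fun z => z * complexPartial p z) (ball (0 : ℂ) 1 \ {0}) :=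
    fun z hz => (differentiableAt_id.mul
      (HarmonicAt.differentiableAt_complex_partial (hp z hz))).differentiableWithinAt
  refine ⟨_, differentiableOn_update_limUnder_of_isLittleO (ball_mem_nhds 0 one_pos) hd ho,
    fun z hz => ?_⟩
  rw [Function.update_of_ne hz.2]

lemma im_eq_zero_of_complexPartial_eq_div {q : ℂ → ℝ} {a : ℂ}
    (hd : ∀ z ∈ ball (0 : ℂ) 1 \ {0}, DifferentiableAt ℝ q z)
    (hq : ∀ z ∈ ball (0 : ℂ) 1 \ {0}, complexPartial q z = a / z) : a.im = 0 := by
  have hderiv : ∀ θ : ℝ, HasDerivAt (fun θ : ℝ => q (exp (-1 + θ * I)) + a.im * θ) 0 θ := by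
    intro θ
    have hmem : exp (-1 + θ * I) ∈ ball (0 : ℂ) 1 \ {0} := exp_mem_puncturedBall (by simp)
    have he : HasDerivAt (fun θ : ℝ => exp (-1 + θ * I)) (exp (-1 + θ * I) * I) θ := by
      have : HasDerivAt (fun θ : ℝ => -1 + (θ : ℂ) * I) I θ := by
        simpa using ((hasDerivAt_id θ).ofReal_comp.mul_const I).const_add (-1)
      exact this.cexp
    have h1 := (hd _ hmem).hasFDerivAt.comp_hasDerivAt θ he
    rw [fderiv_apply_eq_re_complexPartial_mul, hq _ hmem, ← mul_assoc,
      div_mul_cancel₀ _ (exp_ne_zero _)] at h1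
    have := h1.fun_add ((hasDerivAt_id θ).const_mul a.im)
    simpa using this
  have hconst := is_const_of_deriv_eq_zero (fun θ => (hderiv θ).differentiableAt)
    (fun θ => (hderiv θ).deriv) (2 * Real.pi) 0
  simp [exp_add, exp_two_pi_mul_I, Real.pi_ne_zero] at hconst
  exact hconst

lemma hasFDerivAt_log_norm {z : ℂ} (hz : z ≠ 0) :
    HasFDerivAt (fun y : ℂ => Real.log ‖y‖)
      (reCLM.comp ((ContinuousLinearMap.toSpanSingleton ℂ z⁻¹).restrictScalars ℝ)) z := by
  have h1 : HasDerivAt (fun y : ℂ => log (y / z) + Real.log ‖z‖) z⁻¹ z := by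
    have h2 : HasDerivAt (fun y : ℂ => y / z) (1 / z) z := (hasDerivAt_id z).div_const z
    have := (h2.clog (by simp [hz])).add_const (Real.log ‖z‖ : ℂ)
    simpa [hz] using this
  refine h1.hasFDerivAt_re.congr_of_eventuallyEq ?_
  filter_upwards [isOpen_ne.mem_nhds hz] with y hy
  rw [add_re, log_re, ofReal_re, norm_div,
    Real.log_div (norm_ne_zero_iff.2 hy) (norm_ne_zero_iff.2 hz), sub_add_cancel]

lemma isPreconnected_ball_diff_zero : IsPreconnected (ball (0 : ℂ) 1 \ {0}) := by
  have : ball (0 : ℂ) 1 \ {0} = exp '' {ζ | ζ.re < 0} := by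
    ext z
    refine ⟨fun hz => ⟨log z, ?_, exp_log hz.2⟩, ?_⟩
    · rw [Set.mem_ofPred_eq, log_re]
      exact Real.log_neg (norm_pos_iff.2 hz.2) (mem_ball_zero_iff.1 hz.1)
    · rintro ⟨ζ, hζ, rfl⟩
      exact exp_mem_puncturedBall hζ
  rw [this]
  exact (convex_halfSpace_re_lt 0).isPreconnected.image _ continuous_exp.continuousOn

/-- **Bôcher's theorem** in the plane: a positive harmonic function on the punctured disk is a
multiple of `log ‖z‖` plus the real part of a holomorphic function on the disk. -/
theorem exists_eq_log_norm_add_re_of_pos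
    (hp : HarmonicOnNhd p (ball (0 : ℂ) 1 \ {0})) (hpos : ∀ z ∈ ball (0 : ℂ) 1 \ {0}, 0 < p z) :
    ∃ (c : ℝ) (h : ℂ → ℂ), AnalyticOnNhd ℂ h (ball (0 : ℂ) 1) ∧
      ∀ z ∈ ball (0 : ℂ) 1 \ {0}, p z = c * Real.log ‖z‖ + (h z).re := by
  have hb0 : ball (0 : ℂ) 1 ∈ 𝓝 0 := ball_mem_nhds 0 one_pos
  obtain ⟨G, hG, hGp⟩ := exists_differentiableOn_eq_mul_complexPartial hp hpos
  obtain ⟨h, hh⟩ := ((differentiableOn_dslope hb0).2 hG).isExactOn_ball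
  set q : ℂ → ℝ := fun z => p z - (h z).re with hq
  have hqf : ∀ z ∈ ball (0 : ℂ) 1 \ {0}, HasFDerivAt q _ z := fun z hz =>
    ((hp z hz).1.differentiableAt two_ne_zero).hasFDerivAt.fun_sub (hh z hz.1).hasFDerivAt_re
  have hqd : ∀ z ∈ ball (0 : ℂ) 1 \ {0}, DifferentiableAt ℝ q z := fun z hz =>
    (hqf z hz).differentiableAt
  have hqc : ∀ z ∈ ball (0 : ℂ) 1 \ {0}, complexPartial q z = G 0 / z := fun z hz =>
    complexPartial_eq_of_fderiv_apply fun k => by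
      have hz0 : z ≠ 0 := hz.2
      have hsplit : complexPartial p z = G 0 / z + dslope G 0 z := by
        rw [dslope_of_ne _ hz0, slope_def_field, hGp z hz]
        field_simp
        ring
      rw [(hqf z hz).fderiv, sub_apply, fderiv_apply_eq_re_complexPartial_mul, hsplit]
      simp
      ring
  have him : (G 0).im = 0 := im_eq_zero_of_complexPartial_eq_div hqd hqc
  set c : ℝ := (G 0).re with hc
  have hcG : G 0 = (c : ℂ) := Complex.ext rfl (by simp [him])
  have hld : ∀ z ∈ ball (0 : ℂ) 1 \ {0},
      HasFDerivAt (fun y => q y - c * Real.log ‖y‖) (0 : ℂ →L[ℝ] ℝ) z := fun z hz => by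
    have hz0 : z ≠ 0 := hz.2
    have h1 := (hqd z hz).hasFDerivAt.fun_sub ((hasFDerivAt_log_norm hz0).const_mul c)
    refine h1.congr_fderiv ?_
    ext1 k
    rw [sub_apply, fderiv_apply_eq_re_complexPartial_mul, hqc z hz, hcG, div_mul_eq_mul_div,
      mul_div_assoc, re_ofReal_mul]
    simp [div_eq_mul_inv]
  obtain ⟨a, ha⟩ := (isOpen_ball.sdiff isClosed_singleton).exists_is_const_of_fderiv_eq_zero
    isPreconnected_ball_diff_zero
    (fun z hz => (hld z hz).differentiableAt.differentiableWithinAt)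
    (fun z hz => (hld z hz).fderiv)
  refine ⟨c, fun z => h z + a, fun z hz => ?_, fun z hz => ?_⟩
  · exact DifferentiableOn.analyticAt
      (fun y hy => ((hh y hy).differentiableAt.add_const _).differentiableWithinAt)
      (isOpen_ball.mem_nhds hz)
  · have := ha z hz
    simp only [hq] at this
    simp
    linarith

end PuncturedDisk

lemma lap_eq_laplacian {u : ℂ → ℝ} {x : ℂ} (hu : ContDiffAt ℝ 2 u x) :
    lap u x = Laplacian.laplacian u x := by
  have hd : DifferentiableAt ℝ (fderiv ℝ u) x :=
    (hu.fderiv_right (m := 1) (by norm_num)).differentiableAt one_ne_zero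
  simp only [lap, laplacian_eq_iteratedFDeriv_complexPlane, iteratedFDeriv_two_apply]
  rw [fderiv_clm_apply hd (by fun_prop), fderiv_clm_apply hd (by fun_prop)]
  simp

lemma harmonicOnNhd_of_lap_eq_zero {u : ℂ → ℝ} {s : Set ℂ} (hs : IsOpen s)
    (hu : ContDiffOn ℝ 2 u s) (h : ∀ x ∈ s, lap u x = 0) : HarmonicOnNhd u s := fun x hx => by
  refine ⟨hu.contDiffAt (hs.mem_nhds hx), ?_⟩
  filter_upwards [hs.mem_nhds hx] with y hy
  rw [← lap_eq_laplacian (hu.contDiffAt (hs.mem_nhds hy)), h y hy, Pi.zero_apply]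

lemma InnerProductSpace.HarmonicAt.lap_eq_zero {u : ℂ → ℝ} {x : ℂ} (hu : HarmonicAt u x) :
    lap u x = 0 := by
  rw [lap_eq_laplacian hu.1, hu.2.eq_of_nhds, Pi.zero_apply]

/-- A harmonic function on the punctured unit disk bounded above by
`-C₁ log|x| + C₂` decomposes as `-(γ/2π) log|x|` plus a harmonic function
on the whole disk. -/
theorem stmt_6 (u : ℂ → ℝ)
    (hu : ContDiffOn ℝ 2 u (ball (0:ℂ) 1 \ {0}))
    (hharm : ∀ x ∈ ball (0:ℂ) 1 \ {0}, lap u x = 0)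
    (C₁ C₂ : ℝ) (hC₁ : 0 < C₁) (hC₂ : 0 < C₂)
    (hbd : ∀ x ∈ ball (0:ℂ) 1 \ {0}, u x ≤ -C₁ * Real.log ‖x‖ + C₂) :
    ∃ (γ : ℝ) (w : ℂ → ℝ), ContDiffOn ℝ 2 w (ball (0:ℂ) 1) ∧
      (∀ x ∈ ball (0:ℂ) 1, lap w x = 0) ∧
      ∀ x ∈ ball (0:ℂ) 1 \ {0},
        u x = -(γ / (2 * Real.pi)) * Real.log ‖x‖ + w x := by
  have hopen : IsOpen (ball (0 : ℂ) 1 \ {0}) := isOpen_ball.sdiff isClosed_singleton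
  set p : ℂ → ℝ := fun z => -C₁ * Real.log ‖z‖ + (C₂ + 1) - u z with hpdef
  have hp : HarmonicOnNhd p (ball (0 : ℂ) 1 \ {0}) := fun z hz => by
    have hlog : HarmonicAt (fun z : ℂ => Real.log ‖z‖) z :=
      AnalyticAt.harmonicAt_log_norm analyticAt_id hz.2
    exact ((hlog.const_smul (c := -C₁)).add (harmonicAt_const (C₂ + 1))).sub
      (harmonicOnNhd_of_lap_eq_zero hopen hu hharm z hz)
  obtain ⟨c, h, hh, hph⟩ := exists_eq_log_norm_add_re_of_pos hp
    fun z hz => by simp only [hpdef]; linarith [hbd z hz]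
  have hw : HarmonicOnNhd (fun z => (C₂ + 1) - (h z).re) (ball (0 : ℂ) 1) := fun z hz =>
    (harmonicAt_const (C₂ + 1)).sub (hh z hz).harmonicAt_re
  refine ⟨2 * Real.pi * (C₁ + c), _, hw.contDiffOn, fun x hx => (hw x hx).lap_eq_zero,
    fun x hx => ?_⟩
  rw [mul_div_cancel_left₀ _ (by positivity)]
  have := hph x hx
  simp only [hpdef] at this
  linarith
end
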